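/- Let B, γ, δ be real numbers with B ≠ 0 and γB − (1−2B)δ = 0. Then the parabola y = P(x), where P(x) = (B − 1/2)x² + (2 − 1/B)δx − (B + (1−2B)δ²)/(2B²), is an invariant curve of the quadratic system ẋ = δx − y + Bx², ẏ = x + γy + xy; i.e., for every real x one has the tangency identity (x + γP(x) + xP(x)) − P′(x)(δx − P(x) + Bx²) = 0. -/

import Mathlib

/-- The parabola `y = P x` is an invariant curve of the quadratic
system `ẋ = δx − y + Bx²`, `ẏ = x + γy + xy`, provided `B ≠ 0` and
`γB − (1−2B)δ = 0`: the tangency identity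
`(x + γP(x) + xP(x)) − P′(x)(δx − P(x) + Bx²) = 0` holds for all `x`. -/
theorem invariant_parabola (B γ δ : ℝ) (hB : B ≠ 0)
    (hcond : γ * B - (1 - 2 * B) * δ = 0)
    (P : ℝ → ℝ)
    (hP : ∀ x, P x = (B - 1/2) * x^2 + (2 - 1/B) * δ * x
      - (B + (1 - 2*B) * δ^2) / (2 * B^2)) :
    ∀ x : ℝ,
      (x + γ * P x + x * P x) - deriv P x * (δ * x - P x + B * x^2) = 0 := by
  intro x
  have hd : HasDerivAt P (2 * (B - 1/2) * x + (2 - 1/B) * δ) x := by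
    rw [funext hP]
    have h := ((((hasDerivAt_id x).pow 2).const_mul (B - 1/2)).add
      ((hasDerivAt_id x).const_mul ((2 - 1/B) * δ))).sub_const
        ((B + (1 - 2*B) * δ^2) / (2 * B^2))
    refine h.congr_deriv ?_
    simp only [id]
    push_cast
    ring
  -- The condition makes `γ` the opposite of the linear coefficient of `P`;
  -- after substituting it, every coefficient in `x` cancels.
  have hγ : γ = (1 - 2 * B) * δ / B := by
    rw [eq_div_iff hB]
    linarith
  rw [hd.deriv, hP, hγ]
  field_simp
  ring
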